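/- arXiv:1807.00497 — 3 statements merged into one kernel-verified Lean document; each statement's English description precedes it below -/
import Mathlib

section
/- Let v₊, v₋ ∈ ℝ^{n+2} be null vectors with ζ := ⟨v₊,v₋⟩ > 0. Then for every s ∈ ℝ one has exp(−s·(v₋∧v₊)) = (id − (v₊v₋* + v₋v₊*)/ζ) + e^{−sζ}·(v₊v₋*)/ζ + e^{sζ}·(v₋v₊*)/ζ. -/
open scoped BigOperators Topology
open Filter Set MeasureTheory

noncomputable section

abbrev E (n : ℕ) := EuclideanSpace ℝ (Fin (n + 2))

/-- Minkowski inner product of signature (n+1,1). -/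
def mink {n : ℕ} (x y : E n) : ℝ :=
  ∑ i, (if i = Fin.last (n + 1) then (-1 : ℝ) else 1) * x i * y i

variable {n : ℕ}

lemma mink_comm (x y : E n) : mink x y = mink y x :=
  Finset.sum_congr rfl fun i _ => by ring

lemma mink_add_right (v x y : E n) : mink v (x + y) = mink v x + mink v y := by
  simp [mink, mul_add, Finset.sum_add_distrib]

lemma mink_smul_right (v : E n) (c : ℝ) (x : E n) : mink v (c • x) = c * mink v x := by
  unfold mink
  rw [Finset.mul_sum]
  refine Finset.sum_congr rfl fun i _ => ?_
  simp only [PiLp.smul_apply, smul_eq_mul]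
  ring

lemma mink_add_left (x y v : E n) : mink (x + y) v = mink x v + mink y v := by
  rw [mink_comm, mink_add_right, mink_comm v x, mink_comm v y]

lemma mink_smul_left (c : ℝ) (x v : E n) : mink (c • x) v = c * mink x v := by
  rw [mink_comm, mink_smul_right, mink_comm v x]

/-- `v ∧ w` as an endomorphism: `x ↦ ⟨v,x⟩ w − ⟨w,x⟩ v`. -/
def wedge {n : ℕ} (v w : E n) : E n →L[ℝ] E n :=
  LinearMap.toContinuousLinearMap
    { toFun := fun x => mink v x • w - mink w x • v
      map_add' := by
        intro x y
        simp only [mink_add_right, add_smul]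
        abel
      map_smul' := by
        intro c x
        simp only [mink_smul_right, RingHom.id_apply, mul_smul, smul_sub] }

/-- rank one endomorphism `vw* : x ↦ ⟨x,w⟩ v`. -/
def rankOne {n : ℕ} (v w : E n) : E n →L[ℝ] E n :=
  LinearMap.toContinuousLinearMap
    { toFun := fun x => mink x w • v
      map_add' := by
        intro x y
        simp only [mink_add_left, add_smul]
      map_smul' := by
        intro c x
        simp only [mink_smul_left, RingHom.id_apply, mul_smul] }

/-!
The operators `p = ζ⁻¹ v₊v₋*` and `q = ζ⁻¹ v₋v₊*` are orthogonal idempotents, because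
`⟨v₊, v₋⟩ = ζ` while `v₊` and `v₋` are null, and `-s (v₋ ∧ v₊) = (-sζ) p + (sζ) q`. Completing
`p, q` by `1 - (p + q)` diagonalizes this operator with eigenvalues `-sζ`, `sζ` and `0`, and the
exponential acts on each eigenvalue separately.
-/

lemma sum_smul_pow_of_completeOrthogonalIdempotents {R A ι : Type*} [CommSemiring R]
    [Semiring A] [Algebra R A] [Fintype ι] {e : ι → A} (he : CompleteOrthogonalIdempotents e)
    (a : ι → R) (k : ℕ) : (∑ i, a i • e i) ^ k = ∑ i, a i ^ k • e i := by
  classical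
  induction k with
  | zero => simp only [pow_zero, one_smul, he.complete]
  | succ k ih =>
    simp only [pow_succ, ih, Finset.sum_mul, Finset.mul_sum, smul_mul_smul_comm, he.mul_eq,
      smul_ite, smul_zero, Finset.sum_ite_eq', Finset.mem_univ, if_true]

section Exponential

variable {𝕜 A ι : Type*} [RCLike 𝕜] [Ring A] [Algebra 𝕜 A] [TopologicalSpace A]
  [IsTopologicalRing A] [ContinuousSMul 𝕜 A] [T2Space A] [Fintype ι] {e : ι → A}

lemma exp_sum_smul_of_completeOrthogonalIdempotents (he : CompleteOrthogonalIdempotents e)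
    (a : ι → 𝕜) :
    NormedSpace.exp (∑ i, a i • e i) = ∑ i, NormedSpace.exp (a i) • e i := by
  have hsum : HasSum (fun k : ℕ => ∑ i, ((k.factorial : 𝕜)⁻¹ • a i ^ k) • e i)
      (∑ i, NormedSpace.exp (a i) • e i) :=
    hasSum_sum fun i _ => (NormedSpace.exp_series_hasSum_exp' (𝕂 := 𝕜) (a i)).smul_const (e i)
  rw [NormedSpace.exp_eq_tsum 𝕜, ← hsum.tsum_eq]
  simp only [sum_smul_pow_of_completeOrthogonalIdempotents he, Finset.smul_sum, smul_assoc]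

lemma exp_sum_smul_of_orthogonalIdempotents (he : OrthogonalIdempotents e) (a : ι → 𝕜) :
    NormedSpace.exp (∑ i, a i • e i) = 1 - ∑ i, e i + ∑ i, NormedSpace.exp (a i) • e i := by
  simpa only [Fintype.sum_option, Option.elim_none, Option.elim_some, zero_smul, zero_add,
    NormedSpace.exp_zero, one_smul] using
    exp_sum_smul_of_completeOrthogonalIdempotents (CompleteOrthogonalIdempotents.option he)
      (Option.elim · 0 a)

end Exponential

lemma orthogonalIdempotents_smulRight_of_biorthogonal {R M ι : Type*} [CommSemiring R]
    [TopologicalSpace R] [AddCommMonoid M] [Module R M] [TopologicalSpace M] [ContinuousAdd M]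
    [ContinuousSMul R M] [DecidableEq ι] {φ : ι → M →L[R] R} {x : ι → M}
    (h : ∀ i j, φ i (x j) = if i = j then 1 else 0) :
    OrthogonalIdempotents fun i => (φ i).smulRight (x i) := by
  refine OrthogonalIdempotents.iff_mul_eq.mpr fun i j => ?_
  rw [ContinuousLinearMap.mul_def, ContinuousLinearMap.smulRight_comp_smulRight, h]
  split_ifs with hij
  · rw [hij, one_smul]
  · rw [zero_smul, ContinuousLinearMap.smulRight_zero]

/-- The formula with the functionals `⟨v₊, ·⟩` and `⟨v₋, ·⟩` replaced by arbitrary `φ` and `ψ`, so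
that `ψ.smulRight x - φ.smulRight y` stands for `v₋ ∧ v₊`. -/
theorem stmt0_general {𝕜 V : Type*} [RCLike 𝕜] [NormedAddCommGroup V] [NormedSpace 𝕜 V]
    (φ ψ : V →L[𝕜] 𝕜) (x y : V) (hφ : φ x = 0) (hψ : ψ y = 0) (hψφ : ψ x = φ y)
    (hζ : φ y ≠ 0) (s : 𝕜) :
    NormedSpace.exp ((-s) • (ψ.smulRight x - φ.smulRight y)) =
      (1 - (φ y)⁻¹ • (ψ.smulRight x + φ.smulRight y))
        + NormedSpace.exp (-(s * φ y)) • (φ y)⁻¹ • ψ.smulRight x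
        + NormedSpace.exp (s * φ y) • (φ y)⁻¹ • φ.smulRight y := by
  have hbi : ∀ i j, ![ψ, φ] i (![(φ y)⁻¹ • x, (φ y)⁻¹ • y] j) = if i = j then 1 else 0 := by
    simp [Fin.forall_fin_two, hφ, hψ, hψφ, hζ]
  have hexp := exp_sum_smul_of_orthogonalIdempotents
    (orthogonalIdempotents_smulRight_of_biorthogonal hbi) ![-(s * φ y), s * φ y]
  have hsmul (χ : V →L[𝕜] 𝕜) (c : 𝕜) (v : V) : χ.smulRight (c • v) = c • χ.smulRight v :=
    (ContinuousLinearMap.smulRightₗ (T := 𝕜) χ).map_smul c v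
  simp only [Fin.sum_univ_two, Matrix.cons_val_zero, Matrix.cons_val_one, hsmul] at hexp
  have hdiag : (-s) • (ψ.smulRight x - φ.smulRight y) =
      (-(s * φ y)) • (φ y)⁻¹ • ψ.smulRight x + (s * φ y) • (φ y)⁻¹ • φ.smulRight y := by
    simp only [neg_smul, mul_smul, smul_inv_smul₀ hζ, smul_sub]
    abel
  rw [hdiag, hexp, smul_add, add_assoc]

/-- The functional `⟨v, ·⟩` dual to `v` under the Minkowski inner product, through which `wedge` and
`rankOne` are expressed by `ContinuousLinearMap.smulRight`. -/
def minkDual (v : E n) : E n →L[ℝ] ℝ :=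
  LinearMap.toContinuousLinearMap
    { toFun := mink v
      map_add' := mink_add_right v
      map_smul' := mink_smul_right v }

lemma rankOne_eq_smulRight (v w : E n) : rankOne v w = (minkDual w).smulRight v :=
  ContinuousLinearMap.ext fun x => congrArg (· • v) (mink_comm x w)

lemma wedge_eq_smulRight_sub_smulRight (v w : E n) :
    wedge v w = (minkDual v).smulRight w - (minkDual w).smulRight v :=
  rfl

/-- Proposition 3.1, Minkowski case: explicit exponential formula. -/
theorem stmt0 {n : ℕ} (vp vm : E n)
    (hvp : mink vp vp = 0) (hvm : mink vm vm = 0)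
    (hζ : 0 < mink vp vm) (s : ℝ) :
    NormedSpace.exp ((-s) • wedge vm vp) =
      (1 - (mink vp vm)⁻¹ • (rankOne vp vm + rankOne vm vp))
        + Real.exp (-(s * mink vp vm)) • (mink vp vm)⁻¹ • rankOne vp vm
        + Real.exp (s * mink vp vm) • (mink vp vm)⁻¹ • rankOne vm vp := by
  rw [wedge_eq_smulRight_sub_smulRight, rankOne_eq_smulRight, rankOne_eq_smulRight,
    Real.exp_eq_exp_ℝ]
  exact stmt0_general (minkDual vp) (minkDual vm) vp vm hvp hvm (mink_comm vm vp) hζ.ne' s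
end
end

section
/- Let v, w ∈ ℝ^{n+2} with v∧w ≠ 0 be such that the Minkowski inner product restricted to the plane span{v,w} is positive definite. Then: (i) there is a constant B with ‖exp(s·(v∧w))‖ ≤ B for all s ∈ ℝ; and (ii) for every p > 0, the map (0,∞) ∋ t ↦ exp(−ln(t/p)·(v∧w)) has no limit as t → 0⁺. -/
open scoped BigOperators Topology
open Filter Set MeasureTheory

noncomputable section

variable {n : ℕ}

/-!
On `span {v, w}` the endomorphism `a = v ∧ w` has trace `0` and determinant the Gram determinant
`θ² = ⟨v, v⟩⟨w, w⟩ - ⟨v, w⟩²`, and its range lies in that plane, so `a³ = -θ² a` by Cayley–Hamilton.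
On a positive definite plane `θ² > 0` by the strict Cauchy–Schwarz inequality, and Rodrigues'
formula shows that `s ↦ exp (s a)` is periodic with period `2π / θ`. A continuous periodic function
is bounded, and one that converges at infinity is constant, which would force `a = 0`.
-/

lemma eq_of_periodic_of_tendsto_atTop {α β : Type*} [AddCommGroup α] [LinearOrder α]
    [IsOrderedAddMonoid α] [Archimedean α] [TopologicalSpace β] [T2Space β] {f : α → β} {c : α}
    {L : β} (hf : Function.Periodic f c) (hc : 0 < c) (hL : Tendsto f atTop (𝓝 L)) (x : α) :
    f x = L := by
  have hshift : Tendsto (fun k : ℕ => x + k • c) atTop atTop :=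
    tendsto_atTop_add_const_left _ x (tendsto_id.atTop_nsmul_const hc)
  refine tendsto_nhds_unique (tendsto_const_nhds.congr fun k => ?_) (hL.comp hshift)
  exact (hf.nsmul k x).symm

section Exponential

variable {𝔸 : Type*} [NormedRing 𝔸] [NormedAlgebra ℝ 𝔸] [CompleteSpace 𝔸] {a : 𝔸}

lemma exp_smul_eq_of_hasDerivAt {f : ℝ → 𝔸} (hf : ∀ s, HasDerivAt f (a * f s) s)
    (hf₀ : f 0 = 1) (s : ℝ) : NormedSpace.exp (s • a) = f s := by
  have heq : (fun s : ℝ => NormedSpace.exp (s • a)) = f :=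
    ODE_solution_unique_univ (v := fun _ x => a * x) (s := fun _ => univ) (t₀ := 0)
      (fun _ => (lipschitzWith_smul a).lipschitzOnWith)
      (fun t => ⟨hasDerivAt_exp_smul_const' a t, mem_univ _⟩)
      (fun t => ⟨hf t, mem_univ _⟩) (by simp [hf₀])
  exact congrFun heq s

/-- **Rodrigues' rotation formula** in a Banach algebra. -/
lemma exp_smul_of_pow_three_eq {θ : ℝ} (hθ : θ ≠ 0) (ha : a ^ 3 = -(θ ^ 2) • a) (s : ℝ) :
    NormedSpace.exp (s • a) =
      1 + (Real.sin (θ * s) / θ) • a + ((1 - Real.cos (θ * s)) / θ ^ 2) • a ^ 2 := by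
  refine exp_smul_eq_of_hasDerivAt (f := fun s =>
    1 + (Real.sin (θ * s) / θ) • a + ((1 - Real.cos (θ * s)) / θ ^ 2) • a ^ 2)
    (fun s => ?_) (by simp) s
  have hlin : HasDerivAt (fun s : ℝ => θ * s) θ s := by
    simpa using (hasDerivAt_id s).const_mul θ
  have hsin := ((hlin.sin.div_const θ).smul_const a).const_add 1
  have hcos := ((hlin.cos.const_sub 1).div_const (θ ^ 2)).smul_const (a ^ 2)
  refine (hsin.add hcos).congr_deriv ?_
  have hmul : a * a ^ 2 = -(θ ^ 2) • a := by rw [← ha, ← pow_succ']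
  simp only [mul_add, mul_one, mul_smul_comm, hmul, ← sq, smul_smul]
  match_scalars <;> field_simp
  ring

lemma periodic_exp_smul_of_pow_three_eq {θ : ℝ} (hθ : θ ≠ 0) (ha : a ^ 3 = -(θ ^ 2) • a) :
    Function.Periodic (fun s : ℝ => NormedSpace.exp (s • a)) (2 * Real.pi / θ) := fun s => by
  simp only [exp_smul_of_pow_three_eq hθ ha, mul_add, mul_div_cancel₀ _ hθ,
    Real.sin_add_two_pi, Real.cos_add_two_pi]

lemma exists_norm_exp_smul_le_of_periodic {c : ℝ} (hc : c ≠ 0)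
    (hper : Function.Periodic (fun s : ℝ => NormedSpace.exp (s • a)) c) :
    ∃ B : ℝ, ∀ s : ℝ, ‖NormedSpace.exp (s • a)‖ ≤ B := by
  have hcont : Continuous fun s : ℝ => NormedSpace.exp (s • a) :=
    (differentiable_exp_smul_const ℝ a).continuous
  simpa only [forall_mem_range] using (hper.isBounded_of_continuous hc hcont).exists_norm_le

lemma eq_zero_of_exp_smul_eq_const {L : 𝔸} (h : ∀ s : ℝ, NormedSpace.exp (s • a) = L) :
    a = 0 := by
  have hderiv : HasDerivAt (fun s : ℝ => NormedSpace.exp (s • a)) a 0 := by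
    simpa using hasDerivAt_exp_smul_const a (0 : ℝ)
  rw [funext h] at hderiv
  exact hderiv.unique (hasDerivAt_const 0 L)

lemma not_tendsto_exp_smul_atTop_of_periodic {c : ℝ} (hc : 0 < c)
    (hper : Function.Periodic (fun s : ℝ => NormedSpace.exp (s • a)) c) (ha : a ≠ 0) (L : 𝔸) :
    ¬ Tendsto (fun s : ℝ => NormedSpace.exp (s • a)) atTop (𝓝 L) := fun hL =>
  ha (eq_zero_of_exp_smul_eq_const (eq_of_periodic_of_tendsto_atTop hper hc hL))

end Exponential

lemma map_neg_log_div_nhdsGT_zero {p : ℝ} (hp : 0 < p) :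
    map (fun t => -Real.log (t / p)) (𝓝[>] 0) = atTop := by
  have hscale {c : ℝ} (hc : 0 < c) : Tendsto (c * ·) (𝓝[>] 0) (𝓝[>] 0) :=
    tendsto_iff_comap.mpr (comap_mulLeft_nhdsGT_zero hc).ge
  simp only [div_eq_inv_mul]
  refine map_eq_of_inverse (fun s => p * Real.exp (-s)) (funext fun s => ?_)
    (tendsto_neg_atBot_atTop.comp (Real.tendsto_log_nhdsGT_zero.comp (hscale (inv_pos.mpr hp))))
    ((hscale hp).comp (Real.tendsto_exp_atBot_nhdsGT.comp tendsto_neg_atTop_atBot))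
  simp [hp.ne']

lemma apply_sq_lt_of_pos_on_span_pair {R M : Type*} [CommRing R] [LinearOrder R]
    [IsStrictOrderedRing R] [AddCommGroup M] [Module R M] [Module.IsTorsionFree R M]
    {B : LinearMap.BilinForm R M} (hB : B.IsSymm) {v w : M} (hvw : LinearIndependent R ![v, w])
    (hpos : ∀ x ∈ Submodule.span R {v, w}, x ≠ 0 → 0 < B x x) :
    B v w ^ 2 < B v v * B w w := by
  let W := Submodule.span R {v, w}
  let v' : W := ⟨v, Submodule.subset_span (by simp)⟩
  let w' : W := ⟨w, Submodule.subset_span (by simp)⟩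
  have hvw' : LinearIndependent R ![v', w'] := by
    refine LinearIndependent.of_comp W.subtype ?_
    convert hvw using 1
    ext i
    fin_cases i <;> rfl
  refine ((B.restrict W).apply_sq_lt_iff_linearIndependent_of_symm (fun x hx => ?_)
    ⟨fun x y => hB.eq x y⟩ v' w').mpr hvw'
  exact hpos x x.2 (by simpa using hx)

section BilinWedge

variable {𝕜 V : Type*} [NontriviallyNormedField 𝕜] [NormedAddCommGroup V] [NormedSpace 𝕜 V]

/-- The endomorphism `v ∧ w : x ↦ B(v, x) w - B(w, x) v` attached to a continuous bilinear
form `B`; for symmetric `B` it is skew-adjoint, and `wedge` is the case of the Minkowski form. -/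
def bilinWedge (B : V →L[𝕜] V →L[𝕜] 𝕜) (v w : V) : V →L[𝕜] V :=
  (B v).smulRight w - (B w).smulRight v

lemma bilinWedge_apply (B : V →L[𝕜] V →L[𝕜] 𝕜) (v w x : V) :
    bilinWedge B v w x = B v x • w - B w x • v := rfl

lemma linearIndependent_of_bilinWedge_ne_zero {B : V →L[𝕜] V →L[𝕜] 𝕜} {v w : V}
    (h : bilinWedge B v w ≠ 0) : LinearIndependent 𝕜 ![v, w] := by
  contrapose! h
  ext x
  obtain rfl | hv := eq_or_ne v 0
  · simp [bilinWedge_apply]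
  · simp only [LinearIndependent.pair_iff' hv, not_forall, not_not] at h
    obtain ⟨c, rfl⟩ := h
    simp [bilinWedge_apply, smul_smul, mul_comm]

lemma bilinWedge_ne_zero_of_sq_ne {B : V →L[𝕜] V →L[𝕜] 𝕜} {v w : V}
    (h : B v w ^ 2 ≠ B v v * B w w) : bilinWedge B v w ≠ 0 := by
  intro h₀
  have hBvw : B v (bilinWedge B v w w) = B v w ^ 2 - B v v * B w w := by
    simp only [bilinWedge_apply, map_sub, map_smul, smul_eq_mul]
    ring
  refine h (sub_eq_zero.mp ?_)
  rw [← hBvw, h₀, zero_apply, map_zero]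

lemma bilinWedge_pow_three {B : V →L[𝕜] V →L[𝕜] 𝕜} (hB : B.toBilinForm.IsSymm) (v w : V) :
    bilinWedge B v w ^ 3 = -(B v v * B w w - B v w ^ 2) • bilinWedge B v w := by
  have hwv : B w v = B v w := hB.eq w v
  ext x
  simp only [pow_succ, pow_zero, one_mul, mul_apply_eq_comp, smul_apply, bilinWedge_apply,
    map_sub, map_smul, hwv]
  module

end BilinWedge

theorem stmt2_general {V : Type*} [NormedAddCommGroup V] [NormedSpace ℝ V] [CompleteSpace V]
    {B : V →L[ℝ] V →L[ℝ] ℝ} (hB : B.toBilinForm.IsSymm) {v w : V}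
    (hgram : B v w ^ 2 < B v v * B w w) :
    (∃ C : ℝ, ∀ s : ℝ, ‖NormedSpace.exp (s • bilinWedge B v w)‖ ≤ C) ∧
    ∀ p : ℝ, 0 < p →
      ¬ ∃ L : V →L[ℝ] V,
        Tendsto (fun t : ℝ => NormedSpace.exp ((-Real.log (t / p)) • bilinWedge B v w))
          (𝓝[>] 0) (𝓝 L) := by
  obtain ⟨θ, hθ, hθ_sq⟩ : ∃ θ : ℝ, 0 < θ ∧ θ ^ 2 = B v v * B w w - B v w ^ 2 :=
    ⟨_, Real.sqrt_pos.mpr (sub_pos.mpr hgram), Real.sq_sqrt (sub_pos.mpr hgram).le⟩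
  have hper : Function.Periodic (fun s : ℝ => NormedSpace.exp (s • bilinWedge B v w))
      (2 * Real.pi / θ) :=
    periodic_exp_smul_of_pow_three_eq hθ.ne' (hθ_sq ▸ bilinWedge_pow_three hB v w)
  have hperiod : 0 < 2 * Real.pi / θ := by positivity
  refine ⟨exists_norm_exp_smul_le_of_periodic hperiod.ne' hper, fun p hp ⟨L, hL⟩ => ?_⟩
  refine not_tendsto_exp_smul_atTop_of_periodic hperiod hper
    (bilinWedge_ne_zero_of_sq_ne hgram.ne) L ?_
  rwa [← map_neg_log_div_nhdsGT_zero hp, tendsto_map'_iff]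

/-- The Minkowski inner product `mink` as a bundled continuous bilinear form. -/
def minkForm (n : ℕ) : E n →L[ℝ] E n →L[ℝ] ℝ :=
  (LinearMap.mk₂ ℝ mink mink_add_left mink_smul_left mink_add_right
    fun c x y => mink_smul_right x c y).toContinuousBilinearMap

lemma minkForm_isSymm (n : ℕ) : (minkForm n).toBilinForm.IsSymm := ⟨mink_comm⟩

lemma bilinWedge_minkForm (v w : E n) : bilinWedge (minkForm n) v w = wedge v w := rfl

/-- Proposition 3.1, spacelike case: bounded but no limit. -/
theorem stmt2 {n : ℕ} (v w : E n) (hvw : wedge v w ≠ 0)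
    (hpos : ∀ x : E n, x ∈ Submodule.span ℝ {v, w} → x ≠ 0 → 0 < mink x x) :
    (∃ B : ℝ, ∀ s : ℝ, ‖NormedSpace.exp (s • wedge v w)‖ ≤ B) ∧
    ∀ p : ℝ, 0 < p →
      ¬ ∃ L : E n →L[ℝ] E n,
        Tendsto (fun t : ℝ => NormedSpace.exp ((-Real.log (t / p)) • wedge v w))
          (𝓝[>] 0) (𝓝 L) := by
  rw [← bilinWedge_minkForm] at hvw ⊢
  exact stmt2_general (minkForm_isSymm n) (apply_sq_lt_of_pos_on_span_pair (minkForm_isSymm n)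
    (linearIndependent_of_bilinWedge_ne_zero hvw) hpos)
end
end

section
/- Let v₀ ∈ ℝ^{n+2} be null and nonzero, let w̃ ∈ ℝ^{n+2} satisfy ⟨v₀,w̃⟩ = 0 and ‖w̃‖² > 0, set A := v₀∧w̃, let b > 0, and put ℓ(p,t) := 1 + (ln(t/p))². Then: (i) there is a constant B such that for all p,t ∈ (0,b), ℓ(p,t)^{−1}·‖exp(−ln(t/p)·A)‖ ≤ B; and (ii) for every p ∈ (0,b), ℓ(p,t)^{−1}·exp(−ln(t/p)·A) converges to −(‖w̃‖²/2)·v₀v₀* as t → 0⁺. -/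
open scoped BigOperators Topology
open Filter Set MeasureTheory

noncomputable section

variable {n : ℕ}

/-!
Set `A = v₀ ∧ w̃`. Since `v₀` is null and orthogonal to `w̃`, we have `A v₀ = 0` and
`A w̃ = -‖w̃‖² v₀`, so `A² = -‖w̃‖² v₀v₀*` and `A³ = 0`. The exponential series therefore stops
after three terms, `exp (s A) = 1 + s A + (s² / 2) A²`, and dividing by `1 + s²` leaves
bounded coefficients of `1`, `A`, `A²` which tend to `0`, `0`, `1 / 2` as `|s| → ∞`. Here
`s = -log (t / p)`.
-/

lemma wedge_apply (v w x : E n) : wedge v w x = mink v x • w - mink w x • v := rfl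

lemma rankOne_apply (v w x : E n) : rankOne v w x = mink x w • v := rfl

lemma wedge_apply_left {v w : E n} (hv : mink v v = 0) (hvw : mink v w = 0) :
    wedge v w v = 0 := by
  rw [wedge_apply, mink_comm w v, hv, hvw, zero_smul, zero_smul, sub_zero]

lemma wedge_apply_right {v w : E n} (hvw : mink v w = 0) :
    wedge v w w = -mink w w • v := by
  rw [wedge_apply, hvw, zero_smul, zero_sub, neg_smul]

lemma wedge_sq {v w : E n} (hv : mink v v = 0) (hvw : mink v w = 0) :
    wedge v w ^ 2 = (-mink w w) • rankOne v v := by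
  ext1 x
  calc (wedge v w ^ 2) x = wedge v w (mink v x • w - mink w x • v) := by
        rw [pow_two, mul_apply_eq_comp, wedge_apply v w x]
    _ = mink v x • (-mink w w • v) := by
        rw [map_sub, map_smul, map_smul, wedge_apply_left hv hvw, wedge_apply_right hvw,
          smul_zero, sub_zero]
    _ = ((-mink w w) • rankOne v v) x := by
        rw [smul_apply, rankOne_apply, mink_comm x v, smul_comm]

lemma wedge_pow_three {v w : E n} (hv : mink v v = 0) (hvw : mink v w = 0) :
    wedge v w ^ 3 = 0 := by
  ext1 x
  calc (wedge v w ^ 3) x = wedge v w (-mink w w • mink x v • v) := by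
        rw [pow_succ', mul_apply_eq_comp, wedge_sq hv hvw, smul_apply, rankOne_apply]
    _ = 0 := by
        rw [map_smul, map_smul, wedge_apply_left hv hvw, smul_zero, smul_zero]

lemma half_smul_wedge_sq {v w : E n} (hv : mink v v = 0) (hvw : mink v w = 0) :
    (1 / 2 : ℝ) • wedge v w ^ 2 = (-(mink w w / 2)) • rankOne v v := by
  rw [wedge_sq hv hvw, smul_smul]
  ring_nf

lemma tendsto_log_div_nhdsGT_zero {p : ℝ} (hp : 0 < p) :
    Tendsto (fun t : ℝ => Real.log (t / p)) (𝓝[>] 0) atBot := by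
  have hlog : Tendsto (fun t : ℝ => Real.log t - Real.log p) (𝓝[>] 0) atBot :=
    tendsto_atBot_add_const_right _ _ Real.tendsto_log_nhdsGT_zero
  refine hlog.congr' ?_
  filter_upwards [self_mem_nhdsWithin] with t ht
  exact (Real.log_div (ne_of_gt ht) hp.ne').symm

section NilpotentExponential

lemma exp_eq_sum_range_of_pow_eq_zero (𝕂 : Type*) {𝔸 : Type*} [Field 𝕂] [CharZero 𝕂] [Ring 𝔸]
    [Algebra 𝕂 𝔸] [TopologicalSpace 𝔸] [IsTopologicalRing 𝔸] {a : 𝔸} {k : ℕ} (ha : a ^ k = 0) :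
    NormedSpace.exp a = ∑ i ∈ Finset.range k, (i.factorial : 𝕂)⁻¹ • a ^ i := by
  rw [NormedSpace.exp_eq_tsum 𝕂]
  refine tsum_eq_sum fun i hi => ?_
  have hki : k ≤ i := by simpa only [Finset.mem_range, not_lt] using hi
  rw [pow_eq_zero_of_le hki ha, smul_zero]

lemma exp_smul_of_pow_three_eq_zero {𝕂 𝔸 : Type*} [Field 𝕂] [CharZero 𝕂] [Ring 𝔸]
    [Algebra 𝕂 𝔸] [TopologicalSpace 𝔸] [IsTopologicalRing 𝔸] {a : 𝔸} (ha : a ^ 3 = 0) (s : 𝕂) :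
    NormedSpace.exp (s • a) = 1 + s • a + (s ^ 2 / 2) • a ^ 2 := by
  have hsa : (s • a) ^ 3 = 0 := by rw [smul_pow, ha, smul_zero]
  rw [exp_eq_sum_range_of_pow_eq_zero 𝕂 hsa]
  simp [Finset.sum_range_succ, smul_pow, smul_smul, div_eq_inv_mul]

variable {𝔸 : Type*} [NormedRing 𝔸] [NormedAlgebra ℝ 𝔸] {a : 𝔸}

lemma inv_one_add_sq_mul_norm_exp_smul_le (ha : a ^ 3 = 0) (s : ℝ) :
    (1 + s ^ 2)⁻¹ * ‖NormedSpace.exp (s • a)‖ ≤ ‖(1 : 𝔸)‖ + ‖a‖ + ‖a ^ 2‖ := by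
  have hs : |s| ≤ 1 + s ^ 2 := abs_le.2 ⟨by nlinarith, by nlinarith⟩
  rw [inv_mul_le_iff₀ (by positivity), exp_smul_of_pow_three_eq_zero ha]
  calc ‖1 + s • a + (s ^ 2 / 2) • a ^ 2‖
      ≤ ‖(1 : 𝔸)‖ + ‖s • a‖ + ‖(s ^ 2 / 2) • a ^ 2‖ := norm_add₃_le
    _ = 1 * ‖(1 : 𝔸)‖ + |s| * ‖a‖ + s ^ 2 / 2 * ‖a ^ 2‖ := by
        rw [norm_smul, norm_smul, Real.norm_eq_abs, Real.norm_of_nonneg (by positivity), one_mul]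
    _ ≤ (1 + s ^ 2) * ‖(1 : 𝔸)‖ + (1 + s ^ 2) * ‖a‖ + (1 + s ^ 2) * ‖a ^ 2‖ := by
        gcongr <;> nlinarith
    _ = (1 + s ^ 2) * (‖(1 : 𝔸)‖ + ‖a‖ + ‖a ^ 2‖) := by ring

lemma tendsto_inv_one_add_sq_smul_exp_smul (ha : a ^ 3 = 0) :
    Tendsto (fun s : ℝ => (1 + s ^ 2)⁻¹ • NormedSpace.exp (s • a)) (Bornology.cobounded ℝ)
      (𝓝 ((1 / 2 : ℝ) • a ^ 2)) := by
  -- In the variable `u = s⁻¹` the function extends continuously to `u = 0`.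
  let f : ℝ → 𝔸 := fun u => (u ^ 2 + 1)⁻¹ • (u ^ 2 • (1 : 𝔸) + u • a + (1 / 2 : ℝ) • a ^ 2)
  have hf : Continuous f :=
    Continuous.smul (Continuous.inv₀ (by fun_prop) fun u => by positivity) (by fun_prop)
  have hf_zero : f 0 = (1 / 2 : ℝ) • a ^ 2 := by simp [f]
  have hf_inv : ∀ s : ℝ, s ≠ 0 → f s⁻¹ = (1 + s ^ 2)⁻¹ • NormedSpace.exp (s • a) := by
    intro s hs
    rw [exp_smul_of_pow_three_eq_zero ha]
    match_scalars <;> field_simp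
  rw [← hf_zero]
  refine ((hf.tendsto 0).comp tendsto_inv₀_cobounded).congr' ?_
  filter_upwards [Bornology.eventually_ne_cobounded (0 : ℝ)] with s hs using hf_inv s hs

theorem stmt4_general (ha : a ^ 3 = 0) :
    (∃ B : ℝ, ∀ p > 0, ∀ t > 0,
        (1 + (Real.log (t / p)) ^ 2)⁻¹ * ‖NormedSpace.exp ((-Real.log (t / p)) • a)‖ ≤ B) ∧
    ∀ p > 0,
      Tendsto (fun t : ℝ => (1 + (Real.log (t / p)) ^ 2)⁻¹ •
          NormedSpace.exp ((-Real.log (t / p)) • a))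
        (𝓝[>] 0) (𝓝 ((1 / 2 : ℝ) • a ^ 2)) := by
  refine ⟨⟨‖(1 : 𝔸)‖ + ‖a‖ + ‖a ^ 2‖, fun p _ t _ => ?_⟩, fun p hp => ?_⟩
  · simpa only [neg_sq] using inv_one_add_sq_mul_norm_exp_smul_le ha (-Real.log (t / p))
  · have hlog : Tendsto (fun t : ℝ => -Real.log (t / p)) (𝓝[>] 0) (Bornology.cobounded ℝ) :=
      (tendsto_neg_atBot_atTop.comp (tendsto_log_div_nhdsGT_zero hp)).mono_right
        IsOrderBornology.atTop_le_cobounded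
    simpa only [Function.comp_def, neg_sq] using
      (tendsto_inv_one_add_sq_smul_exp_smul ha).comp hlog

end NilpotentExponential

/-- Proposition 3.1, part 3: bound and limit for degenerate pure pole forms. -/
theorem stmt4 {n : ℕ} (v0 w : E n)
    (h0 : mink v0 v0 = 0) (hv0 : v0 ≠ 0)
    (horth : mink v0 w = 0) (hw : 0 < mink w w)
    (b : ℝ) (hb : 0 < b) :
    (∃ B : ℝ, ∀ p ∈ Set.Ioo (0:ℝ) b, ∀ t ∈ Set.Ioo (0:ℝ) b,
        (1 + (Real.log (t / p)) ^ 2)⁻¹ *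
          ‖NormedSpace.exp ((-Real.log (t / p)) • wedge v0 w)‖ ≤ B) ∧
    ∀ p ∈ Set.Ioo (0:ℝ) b,
      Tendsto (fun t : ℝ => (1 + (Real.log (t / p)) ^ 2)⁻¹ •
          NormedSpace.exp ((-Real.log (t / p)) • wedge v0 w))
        (𝓝[>] 0) (𝓝 ((-(mink w w / 2)) • rankOne v0 v0)) := by
  obtain ⟨⟨B, hB⟩, hlim⟩ := stmt4_general (wedge_pow_three h0 horth)
  exact ⟨⟨B, fun p hp t ht => hB p hp.1 t ht.1⟩,
    fun p hp => half_smul_wedge_sq h0 horth ▸ hlim p hp.1⟩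
end
end
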